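/- Let (W,S) be a Coxeter system, I ⊆ S, x ∈ W^I a minimal coset representative, and z ∈ W_I. Then the interval structure is compatible: the map u ↦ xu gives an isomorphism from the Bruhat graph of W_I restricted to elements ≤ z onto the Bruhat graph of the coset xW_I restricted to elements ≤ xz; in particular u ≤ u' in W_I if and only if xu ≤ xu' in W. -/

import Mathlib

variable {B W : Type*} [Group W] {M : CoxeterMatrix B}

/-- An edge of the Bruhat graph: `a → a * t` for a reflection `t` increasing the length. -/
def bruhatEdge (cs : CoxeterSystem M W) (a b : W) : Prop :=
  ∃ t, cs.IsReflection t ∧ b = a * t ∧ cs.length a < cs.length b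

/-- The Bruhat order on a Coxeter group. -/
def bruhatLE (cs : CoxeterSystem M W) : W → W → Prop :=
  Relation.ReflTransGen (bruhatEdge cs)

/-- Bruhat order relative to the parabolic subgroup `W_I` (using reflections of `W_I`). -/
def bruhatLEPar (cs : CoxeterSystem M W) (I : Set B) : W → W → Prop :=
  Relation.ReflTransGen (fun a b => ∃ t, cs.IsReflection t ∧
    t ∈ Subgroup.closure (cs.simple '' I) ∧ b = a * t ∧ cs.length a < cs.length b)

open Classical in
/-- The elementary step of the reflection representation on `W × ZMod 2`. -/
noncomputable def refStep (cs : CoxeterSystem M W) (i : B) : Function.End (W × ZMod 2) :=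
  fun q => (cs.simple i * q.1 * cs.simple i, q.2 + if q.1 = cs.simple i then 1 else 0)

lemma ref_aux (cs : CoxeterSystem M W) (i j : B) (r : ℕ) :
    (cs.simple i * cs.simple j) ^ r * cs.simple j * (cs.simple i * cs.simple j) ^ r
      = cs.simple j := by
  induction r with
  | zero => simp
  | succ r ih =>
    rw [pow_succ]
    have h : (cs.simple i * cs.simple j) ^ r * (cs.simple i * cs.simple j) * cs.simple j *
        ((cs.simple i * cs.simple j) ^ r * (cs.simple i * cs.simple j)) =
        (cs.simple i * cs.simple j) ^ r * (cs.simple i * cs.simple j * cs.simple j *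
        ((cs.simple i * cs.simple j) * (cs.simple i * cs.simple j) ^ r)) := by
      rw [← pow_succ' _ r, pow_succ _ r]; simp only [mul_assoc]
    rw [h]
    have h2 : cs.simple i * cs.simple j * cs.simple j *
        ((cs.simple i * cs.simple j) * (cs.simple i * cs.simple j) ^ r)
        = cs.simple j * (cs.simple i * cs.simple j) ^ r := by
      simp [mul_assoc]
    rw [h2, ← mul_assoc, ih]

lemma ref_aux1 (cs : CoxeterSystem M W) (i j : B) (r : ℕ) (t : W) :
    (cs.simple i * cs.simple j) ^ r * t * ((cs.simple i * cs.simple j) ^ r)⁻¹ = cs.simple j ↔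
      t = cs.simple j * (cs.simple i * cs.simple j) ^ (2 * r) := by
  have h := ref_aux cs i j r
  generalize hp : (cs.simple i * cs.simple j) = p at *
  rw [two_mul, pow_add, ← mul_assoc]
  nth_rewrite 1 [← h]
  rw [mul_inv_eq_iff_eq_mul]
  simp only [mul_assoc, mul_right_inj]

lemma ref_aux2 (cs : CoxeterSystem M W) (i j : B) (r : ℕ) (t : W) :
    cs.simple j * ((cs.simple i * cs.simple j) ^ r * t * ((cs.simple i * cs.simple j) ^ r)⁻¹)
      * cs.simple j = cs.simple i ↔
      t = cs.simple j * (cs.simple i * cs.simple j) ^ (2 * r + 1) := by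
  have h := ref_aux cs i j r
  have e : cs.simple j * ((cs.simple i * cs.simple j) ^ r * t *
      ((cs.simple i * cs.simple j) ^ r)⁻¹) * cs.simple j = cs.simple i ↔
      (cs.simple i * cs.simple j) ^ r * t * ((cs.simple i * cs.simple j) ^ r)⁻¹ =
      cs.simple j * (cs.simple i * cs.simple j) := by
    constructor
    · intro h
      generalize (cs.simple i * cs.simple j) ^ r * t *
        ((cs.simple i * cs.simple j) ^ r)⁻¹ = y at h
      rw [← h]; simp [mul_assoc]
    · intro h
      rw [h]; simp [mul_assoc]
  rw [e]
  generalize hp : (cs.simple i * cs.simple j) = p at *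
  have e2 : p ^ (2 * r + 1) = p ^ r * p * p ^ r := by
    rw [← pow_succ, ← pow_add]; congr 1; omega
  have e3 : cs.simple j * p = p ^ r * (cs.simple j * (p ^ r * p)) := by
    nth_rewrite 1 [← h]
    simp only [mul_assoc]
  rw [mul_inv_eq_iff_eq_mul, e2, e3]
  simp only [mul_assoc, mul_right_inj]

open Classical in
lemma ref_pow (cs : CoxeterSystem M W) (i j : B) (n : ℕ) (q : W × ZMod 2) :
    ((refStep cs i * refStep cs j) ^ n) q =
      ((cs.simple i * cs.simple j) ^ n * q.1 * ((cs.simple i * cs.simple j) ^ n)⁻¹,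
        q.2 + ∑ k ∈ Finset.range (2 * n),
          if q.1 = cs.simple j * (cs.simple i * cs.simple j) ^ k then 1 else 0) := by
  induction n with
  | zero => simp; rfl
  | succ n ih =>
    rw [pow_succ']
    change refStep cs i (refStep cs j (((refStep cs i * refStep cs j) ^ n) q)) = _
    rw [ih]
    simp only [refStep, ref_aux1, ref_aux2]
    rw [show 2 * (n + 1) = 2 * n + 1 + 1 by ring, Finset.sum_range_succ, Finset.sum_range_succ]
    ext
    · simp [pow_succ', mul_assoc]
    · simp only [add_assoc]

lemma ref_liftable (cs : CoxeterSystem M W) : M.IsLiftable (refStep cs) := by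
  classical
  intro i j
  funext q
  rw [ref_pow, cs.simple_mul_simple_pow]
  have : ∀ f : ℕ → ZMod 2, (∀ k, f (M i j + k) = f k) →
      ∑ k ∈ Finset.range (2 * M i j), f k = 0 := by
    intro f hf
    rw [two_mul, Finset.sum_range_add]
    simp only [hf]
    exact CharTwo.add_self_eq_zero _
  rw [this]
  · simp; rfl
  · intro k
    simp only [pow_add, cs.simple_mul_simple_pow, one_mul]

/-- The reflection representation. -/
noncomputable def refHom (cs : CoxeterSystem M W) : W →* Function.End (W × ZMod 2) :=
  cs.lift ⟨refStep cs, ref_liftable cs⟩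

/-- Parity of occurrences of `t` in the inversion sequence of `w`. -/
noncomputable def refN (cs : CoxeterSystem M W) (w t : W) : ZMod 2 := (refHom cs w (t, 0)).2

lemma refHom_simple (cs : CoxeterSystem M W) (i : B) : refHom cs (cs.simple i) = refStep cs i :=
  cs.lift_apply_simple (ref_liftable cs) i

lemma refHom_eq (cs : CoxeterSystem M W) (w : W) :
    ∀ q, refHom cs w q = (w * q.1 * w⁻¹, q.2 + refN cs w q.1) := by
  induction w using cs.simple_induction_left with
  | one =>
    intro q
    simp only [refN, map_one]
    change q = (1 * q.1 * 1⁻¹, q.2 + 0)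
    simp
  | mul_simple_left w i ih =>
    intro q
    have e : ∀ q, refHom cs (cs.simple i * w) q = refStep cs i (refHom cs w q) := by
      intro q; rw [map_mul, refHom_simple]; rfl
    rw [refN, e, e, ih, ih]
    simp only [refStep]
    ext
    · simp [mul_assoc]
    · simp [add_assoc]

lemma refN_mul (cs : CoxeterSystem M W) (u v t : W) :
    refN cs (u * v) t = refN cs v t + refN cs u (v * t * v⁻¹) := by
  have : refHom cs (u * v) (t, 0) = refHom cs u (refHom cs v (t, 0)) := by rw [map_mul]; rfl
  rw [refN, this, refHom_eq, refHom_eq]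
  simp

lemma refN_one (cs : CoxeterSystem M W) (t : W) : refN cs 1 t = 0 := by
  simp only [refN, map_one]; rfl

open Classical in
lemma refN_simple (cs : CoxeterSystem M W) (i : B) (t : W) :
    refN cs (cs.simple i) t = if t = cs.simple i then 1 else 0 := by
  rw [refN, refHom_simple]; simp [refStep]

lemma mem_ris_of_refN (cs : CoxeterSystem M W) (ω : List B) (t : W)
    (h : refN cs (cs.wordProd ω) t ≠ 0) : t ∈ cs.rightInvSeq ω := by
  classical
  induction ω with
  | nil => simp [refN_one] at h
  | cons i ω ih =>
    rw [cs.wordProd_cons, refN_mul, refN_simple] at h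
    rw [CoxeterSystem.rightInvSeq, List.mem_cons]
    by_cases h1 : refN cs (cs.wordProd ω) t = 0
    · left
      rw [h1] at h
      split_ifs at h with h2
      · rw [← h2]; simp [mul_assoc]
      · simp at h
    · exact Or.inr (ih h1)

lemma inv_of_refN (cs : CoxeterSystem M W) (w t : W) (h : refN cs w t ≠ 0) :
    cs.IsReflection t ∧ cs.length (w * t) < cs.length w := by
  obtain ⟨ω, hω, rfl⟩ := cs.exists_isReduced w
  exact cs.isRightInversion_of_mem_rightInvSeq hω (mem_ris_of_refN cs ω t h)

lemma refN_self (cs : CoxeterSystem M W) (t : W) (ht : cs.IsReflection t) : refN cs t t = 1 := by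
  obtain ⟨w, i, rfl⟩ := ht
  have h := refN_mul cs w w⁻¹ (w * cs.simple i * w⁻¹)
  rw [mul_inv_cancel, refN_one] at h
  rw [refN_mul, refN_mul]
  have e : w⁻¹ * (w * cs.simple i * w⁻¹) * w⁻¹⁻¹ = cs.simple i := by simp [mul_assoc]
  rw [e] at h ⊢
  have e2 : cs.simple i * cs.simple i * (cs.simple i)⁻¹ = cs.simple i := by simp
  rw [e2, refN_simple, if_pos rfl]
  linear_combination -h

lemma refN_iff (cs : CoxeterSystem M W) (w t : W) (ht : cs.IsReflection t) :
    refN cs w t ≠ 0 ↔ cs.length (w * t) < cs.length w := by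
  refine ⟨fun h => (inv_of_refN cs w t h).2, fun h h0 => ?_⟩
  have : refN cs (w * t) t ≠ 0 := by
    rw [refN_mul, refN_self cs t ht, ht.mul_self, one_mul, ht.inv, h0]; simp
  have := (inv_of_refN cs _ t this).2
  rw [mul_assoc, ht.mul_self, mul_one] at this
  omega

lemma refN_parabolic (cs : CoxeterSystem M W) (I : Set B) (v : W)
    (hv : v ∈ Subgroup.closure (cs.simple '' I)) :
    ∀ t, refN cs v t ≠ 0 → t ∈ Subgroup.closure (cs.simple '' I) := by
  classical
  have cj : ∀ v ∈ Subgroup.closure (cs.simple '' I), ∀ t,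
      v * t * v⁻¹ ∈ Subgroup.closure (cs.simple '' I) →
      t ∈ Subgroup.closure (cs.simple '' I) := by
    intro v hv t h
    have := mul_mem (mul_mem (inv_mem hv) h) hv
    simpa [mul_assoc] using this
  induction hv using Subgroup.closure_induction with
  | mem y hy =>
    intro t h
    obtain ⟨i, hi, rfl⟩ := hy
    rw [refN_simple] at h
    split_ifs at h with h2
    · rw [h2]; exact Subgroup.subset_closure ⟨i, hi, rfl⟩
    · simp at h
  | one => intro t h; exact absurd (refN_one cs t) h
  | mul a b ha hb iha ihb =>
    intro t h
    rw [refN_mul] at h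
    by_cases h1 : refN cs b t = 0
    · rw [h1, zero_add] at h
      exact cj b hb t (iha _ h)
    · exact ihb t h1
  | inv a ha iha =>
    intro t h
    have h2 := refN_mul cs a a⁻¹ t
    rw [mul_inv_cancel, refN_one] at h2
    refine cj a⁻¹ (inv_mem ha) t (iha _ fun h3 => h ?_)
    rw [h3, add_zero] at h2
    exact h2.symm

lemma refN_lift (cs : CoxeterSystem M W) (I : Set B) (x : W)
    (hx : ∀ d ∈ Subgroup.closure (cs.simple '' I), cs.length x ≤ cs.length (x * d))
    (u t : W) (hu : u ∈ Subgroup.closure (cs.simple '' I))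
    (ht : t ∈ Subgroup.closure (cs.simple '' I)) (hr : cs.IsReflection t) :
    cs.length u < cs.length (u * t) ↔ cs.length (x * u) < cs.length (x * u * t) := by
  have key : refN cs (x * u) t = refN cs u t := by
    rw [refN_mul]
    have : refN cs x (u * t * u⁻¹) = 0 := by
      by_contra h
      have h1 := (inv_of_refN cs _ _ h).2
      have h2 := hx _ (mul_mem (mul_mem hu ht) (inv_mem hu))
      omega
    rw [this, add_zero]
  have a := refN_iff cs u t hr
  have b := refN_iff cs (x * u) t hr
  rw [key, a] at b
  have c := hr.length_mul_left_ne u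
  have d := hr.length_mul_left_ne (x * u)
  omega

/-- Minimal length in a coset. -/
noncomputable def cosetLen (cs : CoxeterSystem M W) (I : Set B) (a : W) : ℕ :=
  sInf {n | ∃ d ∈ Subgroup.closure (cs.simple '' I), n = cs.length (a * d)}

lemma cosetLen_le (cs : CoxeterSystem M W) (I : Set B) (a d : W)
    (hd : d ∈ Subgroup.closure (cs.simple '' I)) : cosetLen cs I a ≤ cs.length (a * d) :=
  Nat.sInf_le ⟨d, hd, rfl⟩

lemma cosetLen_spec (cs : CoxeterSystem M W) (I : Set B) (a : W) :
    ∃ d ∈ Subgroup.closure (cs.simple '' I), cosetLen cs I a = cs.length (a * d) :=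
  Nat.sInf_mem (s := {n | ∃ d ∈ Subgroup.closure (cs.simple '' I), n = cs.length (a * d)})
    ⟨_, 1, one_mem _, rfl⟩

lemma cosetLen_mul_le (cs : CoxeterSystem M W) (I : Set B) (a d : W)
    (hd : d ∈ Subgroup.closure (cs.simple '' I)) : cosetLen cs I (a * d) ≤ cosetLen cs I a := by
  obtain ⟨e, he, h⟩ := cosetLen_spec cs I a
  have := cosetLen_le cs I (a * d) (d⁻¹ * e) (mul_mem (inv_mem hd) he)
  rw [h]
  simpa [mul_assoc] using this

lemma cosetLen_mul (cs : CoxeterSystem M W) (I : Set B) (a d : W)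
    (hd : d ∈ Subgroup.closure (cs.simple '' I)) : cosetLen cs I (a * d) = cosetLen cs I a := by
  refine le_antisymm (cosetLen_mul_le cs I a d hd) ?_
  simpa using cosetLen_mul_le cs I (a * d) d⁻¹ (inv_mem hd)

lemma edge_coset (cs : CoxeterSystem M W) (I : Set B) (a t : W) (ht : cs.IsReflection t)
    (h : cs.length a < cs.length (a * t)) :
    t ∈ Subgroup.closure (cs.simple '' I) ∨ cosetLen cs I a < cosetLen cs I (a * t) := by
  obtain ⟨d, hd, hl⟩ := cosetLen_spec cs I (a * t)
  have hN : refN cs (a * t) t ≠ 0 := by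
    rw [refN_iff cs _ t ht, mul_assoc, ht.mul_self, mul_one]; exact h
  have e : a * t = (a * t * d) * d⁻¹ := by simp
  rw [e, refN_mul] at hN
  by_cases h1 : refN cs d⁻¹ t = 0
  · right
    rw [h1, zero_add] at hN
    have h2 := (inv_of_refN cs _ _ hN).2
    rw [hl]
    refine lt_of_le_of_lt (cosetLen_le cs I a d hd) (lt_of_eq_of_lt ?_ h2)
    congr 1
    have : a * t * d * (d⁻¹ * t * d⁻¹⁻¹) = a * (t * t) * d := by simp [mul_assoc]
    rw [this, ht.mul_self, mul_one]
  · left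
    exact refN_parabolic cs I _ (inv_mem hd) t h1

lemma chain_coset (cs : CoxeterSystem M W) (I : Set B) (a b : W) (h : bruhatLE cs a b) :
    cosetLen cs I a ≤ cosetLen cs I b ∧
      (cosetLen cs I a = cosetLen cs I b → bruhatLEPar cs I a b) := by
  induction h with
  | refl => exact ⟨le_rfl, fun _ => Relation.ReflTransGen.refl⟩
  | tail _ hbc ih =>
    obtain ⟨t, ht, rfl, hl⟩ := hbc
    rcases edge_coset cs I _ t ht hl with h1 | h1
    · rw [cosetLen_mul cs I _ t h1]
      exact ⟨ih.1, fun h => (ih.2 h).tail ⟨t, ht, h1, rfl, hl⟩⟩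
    · exact ⟨by omega, fun h => by omega⟩

/-- For `x ∈ W^I` and `z ∈ W_I`, left multiplication `u ↦ x u` identifies
the Bruhat graph of `W_I` restricted to `{u ≤ z}` with the Bruhat graph of the coset
`x W_I` restricted to `{≤ x z}`; in particular `u ≤ u'` in `W_I` iff `x u ≤ x u'` in `W`. -/
theorem stmt_18 (cs : CoxeterSystem M W) (I : Set B) (x : W)
    (hx : ∀ d ∈ Subgroup.closure (cs.simple '' I), cs.length x ≤ cs.length (x * d))
    (z : W) (hz : z ∈ Subgroup.closure (cs.simple '' I)) :
    (∀ u ∈ Subgroup.closure (cs.simple '' I), ∀ u' ∈ Subgroup.closure (cs.simple '' I),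
      bruhatLEPar cs I u z → bruhatLEPar cs I u' z →
      ((∃ t, cs.IsReflection t ∧ t ∈ Subgroup.closure (cs.simple '' I) ∧
          u' = u * t ∧ cs.length u < cs.length u') ↔
        bruhatEdge cs (x * u) (x * u'))) ∧
    (∀ u ∈ Subgroup.closure (cs.simple '' I), ∀ u' ∈ Subgroup.closure (cs.simple '' I),
      (bruhatLEPar cs I u u' ↔ bruhatLE cs (x * u) (x * u'))) := by
  refine ⟨fun u hu u' hu' _ _ => ⟨?_, ?_⟩, fun u hu u' hu' => ⟨fun h => ?_, fun h => ?_⟩⟩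
  · rintro ⟨t, ht, htI, rfl, hl⟩
    refine ⟨t, ht, (mul_assoc _ _ _).symm, ?_⟩
    rw [← mul_assoc]
    exact (refN_lift cs I x hx u t hu htI ht).1 hl
  · rintro ⟨t, ht, he, hl⟩
    rw [mul_assoc, mul_right_inj] at he
    subst he
    have htI : t ∈ Subgroup.closure (cs.simple '' I) := by
      simpa using mul_mem (inv_mem hu) hu'
    refine ⟨t, ht, htI, rfl, ?_⟩
    rw [← mul_assoc] at hl
    exact (refN_lift cs I x hx u t hu htI ht).2 hl
  · have : u' ∈ Subgroup.closure (cs.simple '' I) ∧ bruhatLE cs (x * u) (x * u') := by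
      clear hu'
      induction h with
      | refl => exact ⟨hu, Relation.ReflTransGen.refl⟩
      | tail _ hbc ih =>
        obtain ⟨t, ht, htI, rfl, hl⟩ := hbc
        refine ⟨mul_mem ih.1 htI, ih.2.tail ⟨t, ht, (mul_assoc _ _ _).symm, ?_⟩⟩
        rw [← mul_assoc]
        exact (refN_lift cs I x hx _ t ih.1 htI ht).1 hl
    exact this.2
  · have h1 := (chain_coset cs I _ _ h).2 (by rw [cosetLen_mul cs I _ _ hu, cosetLen_mul cs I _ _ hu'])
    have : ∀ c, bruhatLEPar cs I (x * u) c →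
        x⁻¹ * c ∈ Subgroup.closure (cs.simple '' I) ∧ bruhatLEPar cs I u (x⁻¹ * c) := by
      intro c hc
      induction hc with
      | refl => simpa using ⟨hu, Relation.ReflTransGen.refl⟩
      | @tail b c _ hbc ih =>
        obtain ⟨t, ht, htI, rfl, hl⟩ := hbc
        rw [← mul_assoc]
        refine ⟨mul_mem ih.1 htI, ih.2.tail ⟨t, ht, htI, rfl, ?_⟩⟩
        refine (refN_lift cs I x hx _ t ih.1 htI ht).2 ?_
        simpa using hl
    simpa using (this _ h1).2
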